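/- Fix k ≠ l and let m = m_{kl}. The alternating product G_kG_lG_k⋯ with m + 1 factors (starting with G_k) and the alternating product G_lG_kG_l⋯ with m + 1 factors (starting with G_l) both lie in the two-sided ideal (B) of 𝔇 generated by the Coxeter braid relators. -/

import Mathlib

open scoped TensorProduct

noncomputable section

abbrev Vd (d : ℕ) := Fin d → ℂ
abbrev Ad (d : ℕ) := MvPolynomial (Fin d) ℂ

/-- Action of `g ∈ GL(V)` on polynomials: substitute `X j ↦ (g⁻¹ x)_j`. -/
def glAct {d : ℕ} (g : GL (Fin d) ℂ) : Ad d →ₐ[ℂ] Ad d :=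
  MvPolynomial.aeval fun j =>
    ∑ k, ((g⁻¹ : GL (Fin d) ℂ) : Matrix (Fin d) (Fin d) ℂ) j k • MvPolynomial.X k

/-- Embedding of linear forms on `V` as degree-one polynomials. -/
def lin {d : ℕ} (θ : Vd d →ₗ[ℂ] ℂ) : Ad d :=
  ∑ j, θ (Pi.single j 1) • MvPolynomial.X j

structure CoxeterSetup (d n : ℕ) where
  Γ : Subgroup (GL (Fin d) ℂ)
  finite : Finite Γ
  s : Fin n → Γ
  gen : Subgroup.closure (Set.range s) = (⊤ : Subgroup Γ)
  α : Fin n → (Vd d →ₗ[ℂ] ℂ)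
  coroot : Fin n → Vd d
  pairing : ∀ i, α i (coroot i) = 2
  refl : ∀ i (v : Vd d),
    ((s i : GL (Fin d) ℂ) : Matrix (Fin d) (Fin d) ℂ).mulVec v = v - α i v • coroot i


/-- The subalgebra of `Γ'`-invariant polynomials. -/
def FixedSub {d n : ℕ} (S : CoxeterSetup d n) (Γ' : Subgroup S.Γ) : Subalgebra ℂ (Ad d) where
  carrier := {f | ∀ g ∈ Γ', glAct (g : GL (Fin d) ℂ) f = f}
  mul_mem' := fun hf hg g hgmem => by simp [map_mul, hf g hgmem, hg g hgmem]
  add_mem' := fun hf hg g hgmem => by simp [map_add, hf g hgmem, hg g hgmem]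
  algebraMap_mem' := fun c g _ => by simp

/-- `M` (with `Γ'`-action `ρ`) descends to `A^{Γ'}`. -/
def Descends {d n : ℕ} (S : CoxeterSetup d n) (Γ' : Subgroup S.Γ) (M : Type)
    [AddCommGroup M] [Module ℂ M] [Module (Ad d) M] [IsScalarTower ℂ (Ad d) M]
    (ρ : Γ' →* Module.End ℂ M) : Prop :=
  ∃ (N : Type) (_ : AddCommGroup N) (_ : Module (FixedSub S Γ') N)
    (e : ((Ad d) ⊗[FixedSub S Γ'] N) ≃ₗ[Ad d] M),
    ∀ (g : Γ') (a : Ad d) (x : N),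
      ρ g (e (a ⊗ₜ x)) = e ((glAct ((g : S.Γ) : GL (Fin d) ℂ) a) ⊗ₜ x)


/-- Alternating product `x·y·x·⋯` with `m` factors, starting with `x`. -/
def altProd {M : Type*} [Monoid M] (x y : M) : ℕ → M
  | 0 => 1
  | (j + 1) => x * altProd y x j

/-- The order `m_{ij}` of `sᵢ sⱼ` in `Γ`. -/
def mOrd {d n : ℕ} (S : CoxeterSetup d n) (i j : Fin n) : ℕ :=
  orderOf (S.s i * S.s j)

/-- Relations presenting the Demazure descent algebra `𝔇`: the inclusion of `A` is a
`ℂ`-algebra map, `Gᵢ² = 0`, and `Gᵢ·θ = θ(αᵢ^∨) + sᵢ(θ)·Gᵢ` for linear forms `θ`. -/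
inductive DRel {d n : ℕ} (S : CoxeterSetup d n) :
    FreeAlgebra ℂ (Ad d ⊕ Fin n) → FreeAlgebra ℂ (Ad d ⊕ Fin n) → Prop
  | add (a b : Ad d) :
      DRel S (FreeAlgebra.ι ℂ (Sum.inl a) + FreeAlgebra.ι ℂ (Sum.inl b))
        (FreeAlgebra.ι ℂ (Sum.inl (a + b)))
  | mul (a b : Ad d) :
      DRel S (FreeAlgebra.ι ℂ (Sum.inl a) * FreeAlgebra.ι ℂ (Sum.inl b))
        (FreeAlgebra.ι ℂ (Sum.inl (a * b)))
  | scalar (c : ℂ) :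
      DRel S (algebraMap ℂ _ c) (FreeAlgebra.ι ℂ (Sum.inl (algebraMap ℂ (Ad d) c)))
  | sq (i : Fin n) :
      DRel S (FreeAlgebra.ι ℂ (Sum.inr i) * FreeAlgebra.ι ℂ (Sum.inr i)) 0
  | straighten (i : Fin n) (θ : Vd d →ₗ[ℂ] ℂ) :
      DRel S (FreeAlgebra.ι ℂ (Sum.inr i) * FreeAlgebra.ι ℂ (Sum.inl (lin θ)))
        (algebraMap ℂ _ (θ (S.coroot i)) +
          FreeAlgebra.ι ℂ (Sum.inl (glAct ((S.s i : S.Γ) : GL (Fin d) ℂ) (lin θ))) *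
            FreeAlgebra.ι ℂ (Sum.inr i))

/-- The Demazure descent algebra `𝔇`. -/
abbrev DD {d n : ℕ} (S : CoxeterSetup d n) := RingQuot (DRel S)

/-- The generator `Gᵢ ∈ 𝔇`. -/
def GG {d n : ℕ} (S : CoxeterSetup d n) (i : Fin n) : DD S :=
  RingQuot.mkRingHom (DRel S) (FreeAlgebra.ι ℂ (Sum.inr i))

/-- The canonical ring homomorphism `A → 𝔇`. -/
def ofA {d n : ℕ} (S : CoxeterSetup d n) : Ad d →+* DD S where
  toFun a := RingQuot.mkRingHom (DRel S) (FreeAlgebra.ι ℂ (Sum.inl a))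
  map_one' := by
    have h := RingQuot.mkRingHom_rel (DRel.scalar (S := S) 1)
    simpa using h.symm
  map_mul' a b := by
    exact ((RingQuot.mkRingHom_rel (DRel.mul (S := S) a b)).symm).trans (map_mul _ _ _)
  map_zero' := by
    have h := RingQuot.mkRingHom_rel (DRel.scalar (S := S) 0)
    simpa using h.symm
  map_add' a b := by
    exact ((RingQuot.mkRingHom_rel (DRel.add (S := S) a b)).symm).trans (map_add _ _ _)

/-- The element `σᵢ := 1 − αᵢ·Gᵢ ∈ 𝔇`. -/
def sigmaD {d n : ℕ} (S : CoxeterSetup d n) (i : Fin n) : DD S :=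
  1 - ofA S (lin (S.α i)) * GG S i

/-- The set of Coxeter braid relators `B_{ij}`. -/
def coxeterBraidSet {d n : ℕ} (S : CoxeterSetup d n) : Set (DD S) :=
  {x | ∃ i j : Fin n, i ≠ j ∧
    x = altProd (sigmaD S i) (sigmaD S j) (mOrd S i j) -
        altProd (sigmaD S j) (sigmaD S i) (mOrd S i j)}

/-- The set of Demazure braid relators `B^D_{ij}`. -/
def demazureBraidSet {d n : ℕ} (S : CoxeterSetup d n) : Set (DD S) :=
  {x | ∃ i j : Fin n, i ≠ j ∧
    x = altProd (GG S i) (GG S j) (mOrd S i j) -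
        altProd (GG S j) (GG S i) (mOrd S i j)}

/-- The product in `𝔇` of the generators `G` along a word. -/
def wordProd {d n : ℕ} (S : CoxeterSetup d n) (w : List (Fin n)) : DD S :=
  (w.map (GG S)).prod

/-- The sequence of roots `α_k, s_k(α_l), s_k s_l(α_k), …` as degree-one polynomials. -/
def rootSeqP {d n : ℕ} (S : CoxeterSetup d n) (k l : Fin n) (j : ℕ) : Ad d :=
  glAct ((altProd (S.s k) (S.s l) j : S.Γ) : GL (Fin d) ℂ)
    (lin (S.α (if Even j then k else l)))

/-- `Δ_{k,l}`, the product of the `m_{kl}` roots `α_k, s_k(α_l), s_k s_l(α_k), …`. -/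
def DeltaP {d n : ℕ} (S : CoxeterSetup d n) (k l : Fin n) : Ad d :=
  ∏ j ∈ Finset.range (mOrd S k l), rootSeqP S k l j



/-! Part 1: chain -/
section Chain

variable {A R : Type*} [CommRing A] [Algebra ℂ A] [Ring R]

def cCo (S : ℕ → A →ₐ[ℂ] A) (Gm : ℕ → ℕ → A) : ℕ → ℕ → A
  | 0, 0 => 1
  | 0, (_ + 1) => 0
  | (r + 1), 0 => S (r + 1) (cCo S Gm r 0)
  | (r + 1), (s + 1) => S (r + 1) (cCo S Gm r (s + 1)) -
      if Even (r + s) then Gm (r + 1) 0 * S (r + 1) (cCo S Gm r s) else 0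

theorem cCo_zero (S : ℕ → A →ₐ[ℂ] A) (Gm : ℕ → ℕ → A) (r : ℕ) : cCo S Gm r 0 = 1 := by
  induction r with
  | zero => simp [cCo]
  | succ r ih => simp [cCo, ih]

theorem cCo_gt (S : ℕ → A →ₐ[ℂ] A) (Gm : ℕ → ℕ → A) (r : ℕ) :
    ∀ s, r < s → cCo S Gm r s = 0 := by
  induction r with
  | zero => intro s hs; cases s with
    | zero => omega
    | succ s => simp [cCo]
  | succ r ih =>
    intro s hs; cases s with
    | zero => omega
    | succ s => simp [cCo, ih s (by omega), ih (s+1) (by omega)]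

theorem chain_E (φ : A →+* R) (S : ℕ → A →ₐ[ℂ] A) (Gm : ℕ → ℕ → A) (G Y σ E : ℕ → R)
    (hσd : ∀ r, σ r = 1 - φ (Gm r 0) * G r)
    (hσ : ∀ r f, σ r * φ f = φ (S r f) * σ r)
    (hY : ∀ r s, Even (r + s) → G (r + 1) * Y s = Y (s + 1))
    (hY0 : ∀ r s, ¬ Even (r + s) → G (r + 1) * Y s = 0)
    (hE0 : E 0 = Y 0) (hE : ∀ r, E (r + 1) = σ (r + 1) * E r) (r : ℕ) :
    ∀ N, r < N → E r = ∑ s ∈ Finset.range N, φ (cCo S Gm r s) * Y s := by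
  induction r with
  | zero =>
    intro N hN
    obtain ⟨N, rfl⟩ : ∃ k, N = k + 1 := ⟨N - 1, by omega⟩
    rw [Finset.sum_range_succ']
    simp [cCo, hE0]
  | succ r ih =>
    intro N hN
    obtain ⟨N, rfl⟩ : ∃ k, N = k + 1 := ⟨N - 1, by omega⟩
    have key : ∀ s, σ (r + 1) * (φ (cCo S Gm r s) * Y s) =
        φ (S (r + 1) (cCo S Gm r s)) * Y s -
        φ (if Even (r + s) then Gm (r + 1) 0 * S (r + 1) (cCo S Gm r s) else 0) * Y (s + 1) := by
      intro s
      rw [← mul_assoc, hσ, mul_assoc, hσd]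
      split_ifs with h
      · rw [sub_mul, mul_assoc, hY r s h, mul_sub, one_mul, ← mul_assoc, ← map_mul,
          mul_comm (S (r+1) _)]
      · rw [sub_mul, mul_assoc, hY0 r s h]; simp
    rw [hE, ih (N + 1) (by omega), Finset.mul_sum, Finset.sum_congr rfl (fun s _ => key s),
      Finset.sum_sub_distrib, Finset.sum_range_succ', Finset.sum_range_succ' (fun s => φ (cCo S Gm (r+1) s) * Y s),
      Finset.sum_range_succ (fun s => φ (if Even (r + s) then Gm (r + 1) 0 * S (r + 1) (cCo S Gm r s) else 0) * Y (s + 1)),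
      cCo_gt S Gm r N (by omega)]
    simp only [map_zero, mul_zero, ite_self, zero_mul, add_zero]
    have : ∀ s, φ (cCo S Gm (r+1) (s+1)) * Y (s+1) = φ (S (r+1) (cCo S Gm r (s+1))) * Y (s+1)
       - φ (if Even (r + s) then Gm (r + 1) 0 * S (r + 1) (cCo S Gm r s) else 0) * Y (s + 1) := by
      intro s
      rw [← sub_mul, ← map_sub]; rfl
    rw [Finset.sum_congr rfl (fun s _ => this s), Finset.sum_sub_distrib]
    simp only [cCo]
    abel

/-- sign -/
def eSg : ℕ → ℂ
  | 0 => 1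
  | (s + 1) => (-1) ^ (s + 1) * eSg s

theorem eSg_ne (s : ℕ) : eSg s ≠ 0 := by
  induction s with
  | zero => simp [eSg]
  | succ s ih => simp [eSg, ih]

theorem S_prod (S : ℕ → A →ₐ[ℂ] A) (Gm : ℕ → ℕ → A)
    (hS : ∀ r t, S (r + 1) (Gm r t) = - Gm (r + 1) (t + 1)) (r h s : ℕ) :
    S (r + 1) (∏ t ∈ Finset.range s, Gm r (h + t)) =
      ((-1 : ℂ) ^ s) • ∏ t ∈ Finset.range s, Gm (r + 1) (h + 1 + t) := by
  rw [map_prod]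
  simp only [hS]
  rw [Finset.prod_neg, Finset.card_range, Algebra.smul_def]
  simp [add_right_comm]

theorem cCo_top (S : ℕ → A →ₐ[ℂ] A) (Gm : ℕ → ℕ → A)
    (hS : ∀ r t, S (r + 1) (Gm r t) = - Gm (r + 1) (t + 1)) (r : ℕ) :
    cCo S Gm r r = eSg r • ∏ t ∈ Finset.range r, Gm r t := by
  induction r with
  | zero => simp [cCo, eSg]
  | succ r ih =>
    have h1 := S_prod S Gm hS r 0 r
    simp only [zero_add] at h1
    rw [cCo, cCo_gt S Gm r (r+1) (by omega), if_pos (by simp), ih, map_smul, h1,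
      Finset.prod_range_succ', eSg]
    simp only [map_zero, zero_sub, Algebra.smul_def, map_mul, map_pow, map_neg, map_one]
    simp only [add_comm 1]
    ring

/-- closed form -/
theorem cCo_closed (S : ℕ → A →ₐ[ℂ] A) (Gm : ℕ → ℕ → A) (b : ℕ → ℂ)
    (hS : ∀ r t, S (r + 1) (Gm r t) = - Gm (r + 1) (t + 1))
    (hP : ∀ r h s, b (h + 1) • Gm r (h + s + 1) + b s • Gm r 0 = b (s + h + 1) • Gm r (h + 1))
    (r : ℕ) : ∀ s h,
    (r = s + 2 * h → (∏ i ∈ Finset.range s, b (i + 1)) • cCo S Gm r s =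
      (eSg s * ∏ i ∈ Finset.range s, b (h + 1 + i)) • ∏ t ∈ Finset.range s, Gm r (h + t)) ∧
    (r = s + 2 * h + 1 → (∏ i ∈ Finset.range s, b (i + 1)) • cCo S Gm r s =
      ((-1) ^ s * eSg s * ∏ i ∈ Finset.range s, b (h + 1 + i)) •
        ∏ t ∈ Finset.range s, Gm r (h + 1 + t)) := by
  induction r with
  | zero =>
    intro s h
    refine ⟨fun e => ?_, fun e => by omega⟩
    obtain rfl : s = 0 := by omega
    simp [cCo, eSg]
  | succ r ih =>
    intro s h
    rcases s with _ | s
    · simp [cCo_zero, eSg]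
    refine ⟨fun e => ?_, fun e => ?_⟩
    · rcases h with _ | h
      · obtain rfl : r = s := by omega
        rw [cCo_top S Gm hS, smul_smul]
        congr 1
        · rw [mul_comm]; simp [add_comm]
        · simp
      · have h1 := (ih (s+1) h).2 (by omega)
        have h2 := (ih s (h+1)).1 (by omega)
        rw [cCo, if_pos (by use s + h + 1; omega), smul_sub, ← map_smul, h1, map_smul, S_prod S Gm hS,
          Finset.prod_range_succ (fun i => b (i+1)), mul_comm _ (b (s+1)), mul_smul (b (s+1)),
          ← mul_smul_comm, ← map_smul, ← mul_smul_comm, ← map_smul, h2, map_smul, map_smul, S_prod S Gm hS,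
          Finset.prod_range_succ (fun t => Gm (r+1) (h + 1 + 1 + t)),
          Finset.prod_range_succ' (fun t => Gm (r+1) (h + 1 + t)),
          Finset.prod_range_succ' (fun i => b (h + 1 + i)),
          Finset.prod_range_succ (fun i => b (h + 1 + 1 + i)), eSg]
        have h3 := hP (r+1) h (s+1)
        have e1 : ∏ t ∈ Finset.range s, Gm (r+1) (h + 1 + (t + 1)) =
            ∏ t ∈ Finset.range s, Gm (r+1) (h + 1 + 1 + t) :=
          Finset.prod_congr rfl fun t _ => by congr 1; omega
        have e1' : ∏ t ∈ Finset.range s, b (h + 1 + (t + 1)) =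
            ∏ t ∈ Finset.range s, b (h + 1 + 1 + t) :=
          Finset.prod_congr rfl fun t _ => by congr 1; omega
        have e2 : h + 1 + 1 + s = h + (s + 1) + 1 := by omega
        have e3 : s + 1 + h + 1 = h + (s + 1) + 1 := by omega
        rw [e1, e1', e2, add_zero]
        rw [e3] at h3
        have hs : ((-1 : A) ^ s * (-1) ^ s) = 1 := by rw [← mul_pow]; simp
        simp only [Algebra.smul_def, map_mul, map_pow, map_neg, map_one] at h3 ⊢
        generalize algebraMap ℂ A (b (h+1)) = b1 at *
        generalize algebraMap ℂ A (b (s+1)) = b2 at *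
        generalize algebraMap ℂ A (b (h + (s+1)+1)) = b3 at *
        generalize algebraMap ℂ A (eSg s) = ee at *
        generalize algebraMap ℂ A (∏ i ∈ Finset.range s, b (h + 1 + 1 + i)) = W at *
        generalize (∏ i ∈ Finset.range s, Gm (r+1) (h + 1 + 1 + i)) = Z at *
        simp only [pow_succ]
        generalize ((-1 : A) ^ s) = u at *
        linear_combination (-1 * ee * u * W * Z) * h3 + (- u * ee * W * b1 * Z * Gm (r+1) (h + (s+1) + 1)) * hs
    · have h1 := (ih (s+1) h).1 (by omega)
      rw [cCo, if_neg (by rw [Nat.not_even_iff_odd]; use s + h; omega), sub_zero, ← map_smul, h1,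
        map_smul, S_prod S Gm hS, smul_smul]
      congr 1
      ring

end Chain

section PQsec

variable {A R : Type*} [CommRing A] [IsDomain A] [Algebra ℂ A] [Ring R]

structure PQ (φ : A →+* R) (s0 s1 : A →ₐ[ℂ] A) (g0 g1 : R) (p q : A) (η : ℂ) (m : ℕ) : Prop where
  m0 : 0 < m
  prim : IsPrimitiveRoot (η ^ 2) m
  em : η ^ m = -1
  s0p : s0 p = q
  s0q : s0 q = p
  s1p : s1 p = (η ^ 2) • q
  s1q : s1 q = ((η ^ 2)⁻¹) • p
  L0 : ∀ f f', (p - q) * f' = f - s0 f → g0 * φ f = φ f' + φ (s0 f) * g0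
  L1 : ∀ f f', (η⁻¹ • p - η • q) * f' = f - s1 f → g1 * φ f = φ f' + φ (s1 f) * g1
  ex0 : ∀ f, ∃ f', (p - q) * f' = f - s0 f
  ex1 : ∀ f, ∃ f', (η⁻¹ • p - η • q) * f' = f - s1 f
  sq0 : g0 * g0 = 0
  sq1 : g1 * g1 = 0
  braid : altProd (1 - φ (p - q) * g0) (1 - φ (η⁻¹ • p - η • q) * g1) m =
    altProd (1 - φ (η⁻¹ • p - η • q) * g1) (1 - φ (p - q) * g0) m

theorem PQ.eta_ne {φ : A →+* R} {s0 s1 : A →ₐ[ℂ] A} {g0 g1 : R} {p q : A} {η : ℂ} {m : ℕ}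
    (H : PQ φ s0 s1 g0 g1 p q η m) : η ≠ 0 := by
  rintro rfl
  have := H.em
  rw [zero_pow H.m0.ne'] at this
  norm_num at this

theorem PQ.swap {φ : A →+* R} {s0 s1 : A →ₐ[ℂ] A} {g0 g1 : R} {p q : A} {η : ℂ} {m : ℕ}
    (H : PQ φ s0 s1 g0 g1 p q η m) : PQ φ s1 s0 g1 g0 (-(η • q)) (-(η⁻¹ • p)) η m := by
  have h0 := H.eta_ne
  have e1 : -(η • q) - -(η⁻¹ • p) = η⁻¹ • p - η • q := by abel
  have e2 : η⁻¹ • -(η • q) - η • -(η⁻¹ • p) = p - q := by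
    rw [smul_neg, smul_neg, smul_smul, smul_smul, inv_mul_cancel₀ h0, mul_inv_cancel₀ h0, one_smul,
      one_smul]; abel
  refine ⟨H.m0, H.prim, H.em, ?_, ?_, ?_, ?_, ?_, ?_, ?_, ?_, H.sq1, H.sq0, ?_⟩
  · rw [map_neg, map_smul, H.s1q, smul_smul]; congr 2; field_simp
  · rw [map_neg, map_smul, H.s1p, smul_smul]; congr 2; field_simp
  · rw [map_neg, map_smul, H.s0q, smul_neg, smul_smul]; congr 2; field_simp
  · rw [map_neg, map_smul, H.s0p, smul_neg, smul_smul]; congr 2; field_simp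
  · rw [e1]; exact H.L1
  · rw [e2]; exact H.L0
  · rw [e1]; exact H.ex1
  · rw [e2]; exact H.ex0
  · rw [e1, e2]; exact H.braid.symm

def gam (p q : A) (η : ℂ) (t : ℤ) : A := (η ^ (-t)) • p - (η ^ t) • q

def GamS (p q : A) (η : ℂ) (r t : ℕ) : A :=
  if Even r then gam p q η (-(t : ℤ)) else gam p q η (1 + t)

theorem gam_three (p q : A) (η : ℂ) (h0 : η ≠ 0) (x y z : ℤ) :
    (η ^ (x - y) - η ^ (y - x)) • gam p q η z + (η ^ (y - z) - η ^ (z - y)) • gam p q η x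
     + (η ^ (z - x) - η ^ (x - z)) • gam p q η y = 0 := by
  simp only [gam, smul_sub, smul_smul, sub_mul, ← zpow_add₀ h0, sub_smul]
  have e : ∀ a b c : ℤ, a - b + -c = a - b - c := fun a b c => by ring
  have e1 : y - x - z = y - z - x := by ring
  have e2 : x - y - z = x - z - y := by ring
  have e3 : z - y - x = z - x - y := by ring
  have e4 : x - y + z = z - y + x := by ring
  have e5 : y - z + x = x - z + y := by ring
  have e6 : y - x + z = z - x + y := by ring
  simp only [e, e1, e2, e3, e4, e5, e6]
  abel

theorem prod_gam (p q : A) (η : ℂ) (h0 : η ≠ 0) (u : ℕ → ℤ) (n : ℕ) :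
    ∏ t ∈ Finset.range n, gam p q η (u t) =
      (∏ t ∈ Finset.range n, η ^ (-u t)) • ∏ t ∈ Finset.range n, (p - (η ^ 2) ^ (u t) • q) := by
  induction n with
  | zero => simp
  | succ n ih =>
    rw [Finset.prod_range_succ, ih, Finset.prod_range_succ, Finset.prod_range_succ]
    have : gam p q η (u n) = η ^ (-u n) • (p - (η ^ 2) ^ (u n) • q) := by
      rw [gam, smul_sub, smul_smul]
      congr 2
      have : (η^2 : ℂ) = η ^ (2 : ℤ) := by norm_cast
      rw [this, ← zpow_mul, ← zpow_add₀ h0]; congr 1; ring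
    rw [this, smul_mul_smul_comm]

theorem prod_roots (p q : A) (ζ : ℂ) (m : ℕ) (hm : 0 < m) (hz : IsPrimitiveRoot ζ m) :
    ∏ t ∈ Finset.range m, (p - ζ ^ t • q) = p ^ m - q ^ m := by
  have hA : IsPrimitiveRoot (algebraMap ℂ A ζ) m := hz.map_of_injective (algebraMap ℂ A).injective
  rw [hA.pow_sub_pow_eq_prod_sub_mul p q hm]
  symm
  classical
  apply Finset.prod_nbij' (i := fun x => if h : ∃ i < m, algebraMap ℂ A ζ ^ i = x then h.choose else 0)
    (j := fun t => algebraMap ℂ A ζ ^ t)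
  · intro a ha
    have hx : ∃ i < m, algebraMap ℂ A ζ ^ i = a := by
      have : NeZero m := ⟨hm.ne'⟩
      exact hA.eq_pow_of_pow_eq_one ((Polynomial.mem_nthRootsFinset hm 1).1 ha)
    simp only [dif_pos hx, Finset.mem_range]
    exact hx.choose_spec.1
  · intro t ht
    rw [Polynomial.mem_nthRootsFinset hm, ← pow_mul, mul_comm, pow_mul, hA.pow_eq_one, one_pow]
  · intro a ha
    have hx : ∃ i < m, algebraMap ℂ A ζ ^ i = a := by
      have : NeZero m := ⟨hm.ne'⟩
      exact hA.eq_pow_of_pow_eq_one ((Polynomial.mem_nthRootsFinset hm 1).1 ha)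
    simp only [dif_pos hx]
    exact hx.choose_spec.2
  · intro t ht
    have hx : ∃ i < m, algebraMap ℂ A ζ ^ i = algebraMap ℂ A ζ ^ t := ⟨t, Finset.mem_range.1 ht, rfl⟩
    simp only [dif_pos hx]
    exact hA.pow_inj hx.choose_spec.1 (Finset.mem_range.1 ht) hx.choose_spec.2
  · intro a ha
    have hx : ∃ i < m, algebraMap ℂ A ζ ^ i = a := by
      have : NeZero m := ⟨hm.ne'⟩
      exact hA.eq_pow_of_pow_eq_one ((Polynomial.mem_nthRootsFinset hm 1).1 ha)
    simp only [dif_pos hx]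
    rw [Algebra.smul_def, map_pow, hx.choose_spec.2]

theorem prod_GamS (p q : A) (η : ℂ) (m : ℕ) (hm : 0 < m) (h0 : η ≠ 0)
    (hz : IsPrimitiveRoot (η ^ 2) m) (r : ℕ) :
    ∃ c : ℂ, c ≠ 0 ∧ ∏ t ∈ Finset.range m, GamS p q η r t = c • (p ^ m - q ^ m) := by
  by_cases h : Even r
  · simp only [GamS, if_pos h]
    rw [prod_gam p q η h0 (fun t => -(t : ℤ))]
    refine ⟨∏ t ∈ Finset.range m, η ^ (- -(t : ℤ)), Finset.prod_ne_zero_iff.2 fun t _ => zpow_ne_zero _ h0, ?_⟩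
    rw [← prod_roots p q _ m hm hz.inv]
    simp
  · simp only [GamS, if_neg h]
    rw [prod_gam p q η h0 (fun t => 1 + (t : ℤ))]
    refine ⟨∏ t ∈ Finset.range m, η ^ (-(1 + (t : ℤ))), Finset.prod_ne_zero_iff.2 fun t _ => zpow_ne_zero _ h0, ?_⟩
    congr 1
    rw [← prod_roots p q _ m hm hz]
    have e : ∀ t : ℕ, (η ^ 2) ^ (1 + (t : ℤ)) = (η ^ 2) ^ (t + 1) := by
      intro t; rw [add_comm]; norm_cast
    simp only [e]
    obtain ⟨m, rfl⟩ : ∃ k, m = k + 1 := ⟨m - 1, by omega⟩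
    rw [Finset.prod_range_succ, Finset.prod_range_succ', hz.pow_eq_one]
    simp

end PQsec

section PQchain

variable {A R : Type*} [CommRing A] [IsDomain A] [Algebra ℂ A] [Ring R]

def altS {X : Type*} (x y : X) (r : ℕ) : X := if Even r then x else y

theorem altS_two {X : Type*} (x y : X) (r : ℕ) : altS x y (r + 2) = altS x y r := by
  simp [altS, Nat.even_add]

theorem altS_congr {X : Type*} (x y : X) (r s : ℕ) (h : Even (r + s)) : altS x y r = altS x y s := by
  rw [Nat.even_add] at h
  simp [altS, h]

theorem bnum_ne (η : ℂ) (m : ℕ) (h0 : η ≠ 0) (hp : IsPrimitiveRoot (η ^ 2) m) (i : ℕ) (hi : 0 < i)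
    (him : i < m) : η ^ (i : ℤ) - η ^ (-(i : ℤ)) ≠ 0 := by
  intro h
  apply hp.pow_ne_one_of_pos_of_lt hi.ne' him
  have h1 : η ^ i = (η ^ i)⁻¹ := by
    rw [zpow_neg] at h
    exact_mod_cast sub_eq_zero.1 h
  have h2 : η ^ i * η ^ i = 1 := by
    nth_rewrite 2 [h1]
    exact mul_inv_cancel₀ (pow_ne_zero _ h0)
  rw [← h2]; ring

theorem altProd_sigma_E (σ E : ℕ → R) (hσ : ∀ r, σ (r + 2) = σ r)
    (hE : ∀ r, E (r + 1) = σ (r + 1) * E r) (r : ℕ) :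
    altProd (σ r) (σ (r + 1)) r * E 0 = E r := by
  induction r with
  | zero => simp [altProd]
  | succ r ih =>
    rw [altProd, hσ, mul_assoc, ih, hE]

theorem altProd_sigma_E' (σ E : ℕ → R) (hσ : ∀ r, σ (r + 2) = σ r)
    (h0 : σ 0 * E 0 = E 0)
    (hE : ∀ r, E (r + 1) = σ (r + 1) * E r) (r : ℕ) :
    altProd (σ r) (σ (r + 1)) (r + 1) * E 0 = E r := by
  induction r with
  | zero => simp [altProd, h0]
  | succ r ih =>
    rw [altProd, hσ, mul_assoc, ih, hE]

theorem PQ.sig0 {φ : A →+* R} {s0 s1 : A →ₐ[ℂ] A} {g0 g1 : R} {p q : A} {η : ℂ} {m : ℕ}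
    (H : PQ φ s0 s1 g0 g1 p q η m) (f : A) :
    (1 - φ (p - q) * g0) * φ f = φ (s0 f) * (1 - φ (p - q) * g0) := by
  obtain ⟨f', hf⟩ := H.ex0 f
  rw [sub_mul, mul_assoc, H.L0 f f' hf, mul_add, ← map_mul, hf, ← mul_assoc, ← map_mul, mul_sub,
    ← mul_assoc, ← map_mul, mul_comm (p - q), map_sub]
  simp
  abel

theorem PQ.sig1 {φ : A →+* R} {s0 s1 : A →ₐ[ℂ] A} {g0 g1 : R} {p q : A} {η : ℂ} {m : ℕ}
    (H : PQ φ s0 s1 g0 g1 p q η m) (f : A) :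
    (1 - φ (η⁻¹ • p - η • q) * g1) * φ f = φ (s1 f) * (1 - φ (η⁻¹ • p - η • q) * g1) := by
  obtain ⟨f', hf⟩ := H.ex1 f
  rw [sub_mul, mul_assoc, H.L1 f f' hf, mul_add, ← map_mul, hf, ← mul_assoc, ← map_mul, mul_sub,
    ← mul_assoc, ← map_mul, mul_comm (η⁻¹ • p - η • q), map_sub]
  simp
  abel

theorem PQ.s0gam {φ : A →+* R} {s0 s1 : A →ₐ[ℂ] A} {g0 g1 : R} {p q : A} {η : ℂ} {m : ℕ}
    (H : PQ φ s0 s1 g0 g1 p q η m) (t : ℤ) : s0 (gam p q η t) = - gam p q η (-t) := by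
  simp [gam, H.s0p, H.s0q]

theorem PQ.s1gam {φ : A →+* R} {s0 s1 : A →ₐ[ℂ] A} {g0 g1 : R} {p q : A} {η : ℂ} {m : ℕ}
    (H : PQ φ s0 s1 g0 g1 p q η m) (t : ℤ) : s1 (gam p q η t) = - gam p q η (2 - t) := by
  have h0 := H.eta_ne
  have e : η ^ 2 = η ^ (2 : ℤ) := by norm_cast
  simp only [gam, map_sub, map_smul, H.s1p, H.s1q, smul_smul, e, ← zpow_neg, ← zpow_add₀ h0, neg_sub]
  rw [show -t + 2 = 2 - t by ring, show t + -2 = t - 2 by ring]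

theorem PQ.gam_m {φ : A →+* R} {s0 s1 : A →ₐ[ℂ] A} {g0 g1 : R} {p q : A} {η : ℂ} {m : ℕ}
    (H : PQ φ s0 s1 g0 g1 p q η m) (t : ℤ) : gam p q η (t + m) = - gam p q η t := by
  have h0 := H.eta_ne
  have e : η ^ (m : ℤ) = -1 := by exact_mod_cast H.em
  simp only [gam, neg_add, zpow_add₀ h0, zpow_neg, e]
  simp [add_comm, sub_eq_add_neg]

theorem PQ.S_Gam {φ : A →+* R} {s0 s1 : A →ₐ[ℂ] A} {g0 g1 : R} {p q : A} {η : ℂ} {m : ℕ}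
    (H : PQ φ s0 s1 g0 g1 p q η m) (r t : ℕ) :
    altS s0 s1 (r + 1) (GamS p q η r t) = - GamS p q η (r + 1) (t + 1) := by
  by_cases h : Even r
  · have h' : ¬ Even (r + 1) := by simp [Nat.even_add_one, h]
    simp only [altS, GamS, if_pos h, if_neg h', H.s1gam]
    congr 2; push_cast; ring
  · have h' : Even (r + 1) := by simp [Nat.even_add_one, h]
    simp only [altS, GamS, if_neg h, if_pos h', H.s0gam]
    congr 2; push_cast; ring

theorem GamS_three (p q : A) (η : ℂ) (h0 : η ≠ 0) (r h s : ℕ) :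
    (fun i : ℕ => η ^ (i : ℤ) - η ^ (-(i : ℤ))) (h + 1) • GamS p q η r (h + s + 1) +
    (fun i : ℕ => η ^ (i : ℤ) - η ^ (-(i : ℤ))) s • GamS p q η r 0 =
    (fun i : ℕ => η ^ (i : ℤ) - η ^ (-(i : ℤ))) (s + h + 1) • GamS p q η r (h + 1) := by
  simp only [GamS]
  split_ifs with hr
  · have := gam_three p q η h0 0 (-(h + 1)) (-(h + s + 1))
    push_cast
    rw [show (0 : ℤ) - -(h + 1) = h + 1 by ring, show (-(h + 1) - 0 : ℤ) = -(h+1) by ring,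
      show -((h:ℤ) + 1) - -(h + s + 1) = s by ring, show -((h:ℤ) + s + 1) - -(h + 1) = -s by ring,
      show -((h:ℤ) + s + 1) - 0 = -(s + h + 1) by ring, show 0 - -((h:ℤ) + s + 1) = s + h + 1 by ring,
      ← neg_sub (η ^ ((s:ℤ) + h + 1)), neg_smul] at this
    rw [neg_zero]
    exact add_neg_eq_zero.1 this
  · have := gam_three p q η h0 1 (1 + (h + 1)) (1 + (h + s + 1))
    push_cast
    rw [show (1 : ℤ) - (1 + (h + 1)) = -(h + 1) by ring, show ((1 + (h + 1)) - 1 : ℤ) = (h+1) by ring,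
      show (1 + ((h:ℤ) + 1)) - (1 + (h + s + 1)) = -s by ring,
      show (1 + ((h:ℤ) + s + 1)) - (1 + (h + 1)) = s by ring,
      show (1 + ((h:ℤ) + s + 1)) - 1 = (s + h + 1) by ring,
      show 1 - (1 + ((h:ℤ) + s + 1)) = -(s + h + 1) by ring,
      ← neg_sub (η ^ ((h:ℤ) + 1)), ← neg_sub (η ^ (s:ℤ)), neg_smul, neg_smul] at this
    linear_combination (-1 : A) * this

theorem PQ.Gam_refl {φ : A →+* R} {s0 s1 : A →ₐ[ℂ] A} {g0 g1 : R} {p q : A} {η : ℂ} {m : ℕ}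
    (H : PQ φ s0 s1 g0 g1 p q η (m + 1)) (t : ℕ) (ht : t ≤ m) :
    GamS p q η m t = - GamS p q η (m + 1) (m - t) := by
  by_cases h : Even m
  · have h' : ¬ Even (m + 1) := by simp [Nat.even_add_one, h]
    simp only [GamS, if_pos h, if_neg h']
    have := H.gam_m (-t)
    rw [← neg_eq_iff_eq_neg, ← this]
    congr 1
    push_cast [Nat.cast_sub ht]; ring
  · have h' : Even (m + 1) := by simp [Nat.even_add_one, h]
    simp only [GamS, if_neg h, if_pos h']
    have := H.gam_m (-((m - t : ℕ) : ℤ))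
    rw [← this]
    congr 1
    push_cast [Nat.cast_sub ht]; ring

theorem PQ.prod_refl {φ : A →+* R} {s0 s1 : A →ₐ[ℂ] A} {g0 g1 : R} {p q : A} {η : ℂ} {m : ℕ}
    (H : PQ φ s0 s1 g0 g1 p q η (m + 1)) (h h' s : ℕ) (hh : h + h' + s = m + 1) :
    ∏ t ∈ Finset.range s, GamS p q η m (h + t) =
      ((-1 : ℂ) ^ s) • ∏ t ∈ Finset.range s, GamS p q η (m + 1) (h' + t) := by
  rw [← Finset.prod_range_reflect, Algebra.smul_def, map_pow, map_neg, map_one]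
  conv_lhs => rw [Finset.prod_congr rfl (g := fun t => - GamS p q η (m + 1) (h' + t)) (fun t ht => by
    rw [Finset.mem_range] at ht
    rw [H.Gam_refl _ (by omega)]
    congr 2; omega)]
  rw [Finset.prod_neg, Finset.card_range]

theorem PQ.c_eq {φ : A →+* R} {s0 s1 : A →ₐ[ℂ] A} {g0 g1 : R} {p q : A} {η : ℂ} {m : ℕ}
    (H : PQ φ s0 s1 g0 g1 p q η (m + 1)) (s : ℕ) (hs : s < m + 1) :
    cCo (altS s0 s1) (GamS p q η) (m + 1) s = cCo (altS s0 s1) (GamS p q η) m s := by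
  have h0 := H.eta_ne
  set b : ℕ → ℂ := fun i : ℕ => η ^ (i : ℤ) - η ^ (-(i : ℤ)) with hb
  have hcl := cCo_closed (altS s0 s1) (GamS p q η) b H.S_Gam (GamS_three p q η h0)
  have hQ : (∏ i ∈ Finset.range s, b (i + 1)) ≠ 0 := by
    rw [Finset.prod_ne_zero_iff]
    intro i hi
    rw [Finset.mem_range] at hi
    exact bnum_ne η (m + 1) h0 H.prim (i + 1) (by omega) (by omega)
  have hpp : ((-1 : ℂ) ^ s * (-1) ^ s) = 1 := by rw [← mul_pow]; simp
  refine smul_right_injective A hQ ?_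
  show (∏ i ∈ Finset.range s, b (i + 1)) • _ = (∏ i ∈ Finset.range s, b (i + 1)) • _
  obtain ⟨h, hh | hh⟩ : ∃ h, m = s + 2 * h ∨ m = s + 2 * h + 1 := by
    refine ⟨(m - s) / 2, ?_⟩
    omega
  · rw [(hcl (m + 1) s h).2 (by omega), (hcl m s h).1 hh, H.prod_refl h (h + 1) s (by omega), smul_smul]
    congr 1; ring
  · rw [(hcl (m + 1) s (h + 1)).1 (by omega), (hcl m s h).2 hh, H.prod_refl (h + 1) (h + 1) s (by omega),
      smul_smul]
    congr 1
    have hW : ∏ i ∈ Finset.range s, b (h + 1 + 1 + i) = ∏ i ∈ Finset.range s, b (h + 1 + i) := by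
      rcases s with _ | s
      · simp
      rw [Finset.prod_range_succ, Finset.prod_range_succ']
      congr 1
      · refine Finset.prod_congr rfl fun t _ => by congr 1; omega
      · have e : η ^ ((m + 1 : ℕ) : ℤ) = -1 := by exact_mod_cast H.em
        have e2 : ((h + 1 + 1 + s : ℕ) : ℤ) = ((m + 1 : ℕ) : ℤ) - (h + 1) := by
          push_cast; omega
        simp only [hb, e2]
        rw [neg_sub, zpow_sub₀ h0, zpow_sub₀ h0, e, zpow_neg]
        push_cast
        simp
        ring
    rw [hW]
    linear_combination (-eSg s * ∏ i ∈ Finset.range s, b (h + 1 + i)) * hpp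

theorem PQ.kill {φ : A →+* R} {s0 s1 : A →ₐ[ℂ] A} {g0 g1 : R} {p q : A} {η : ℂ} {m : ℕ}
    (H : PQ φ s0 s1 g0 g1 p q η m) (n : ℕ) :
    φ (p ^ m - q ^ m) * altProd (altS g0 g1 m) (altS g0 g1 (m + 1)) (n + 1 + m) = 0 := by
  have h0 := H.eta_ne
  obtain ⟨m, rfl⟩ : ∃ k, m = k + 1 := ⟨m - 1, by have := H.m0; omega⟩
  set G := altS g0 g1 with hG
  have hGG : ∀ r, G r * G r = 0 := by
    intro r; simp only [hG, altS]; split_ifs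
    exacts [H.sq0, H.sq1]
  set Y : ℕ → R := fun r => altProd (G r) (G (r + 1)) (n + 1 + r) with hYd
  have hYs : ∀ r, Y (r + 1) = G (r + 1) * Y r := by
    intro r
    simp only [hYd]
    rw [← add_assoc, altProd, hG, altS_two]
  have hYz : ∀ r, G r * Y r = 0 := by
    intro r
    simp only [hYd]
    rw [show n + 1 + r = n + r + 1 by omega, altProd, ← mul_assoc, hGG, zero_mul]
  set σ : ℕ → R := fun r => 1 - φ (GamS p q η r 0) * G r with hσd
  have gm0 : gam p q η (-((0 : ℕ) : ℤ)) = p - q := by simp [gam]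
  have gm1 : gam p q η (1 + ((0 : ℕ) : ℤ)) = η⁻¹ • p - η • q := by simp [gam]
  have hσe : ∀ r, σ r = altS (1 - φ (p - q) * g0) (1 - φ (η⁻¹ • p - η • q) * g1) r := by
    intro r
    simp only [hσd, hG, altS, GamS]
    split_ifs
    · rw [gm0]
    · rw [gm1]
  have hσ2 : ∀ r, σ (r + 2) = σ r := by
    intro r; rw [hσe, hσe, altS_two]
  let E : ℕ → R := fun r => Nat.rec (Y 0) (fun r e => σ (r + 1) * e) r
  have hE : ∀ r, E (r + 1) = σ (r + 1) * E r := fun r => rfl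
  have hE0 : E 0 = Y 0 := rfl
  have hx := chain_E φ (altS s0 s1) (GamS p q η) G Y σ E (fun r => rfl)
    (by
      intro r f
      rw [hσe]
      simp only [altS]
      split_ifs
      · exact H.sig0 f
      · exact H.sig1 f)
    (by
      intro r s h
      rw [hYs, hG, altS_congr g0 g1 (r + 1) (s + 1) (by rw [Nat.even_add] at *; simp [Nat.even_add_one, h])])
    (by
      intro r s h
      rw [hG, altS_congr g0 g1 (r + 1) s (by rw [Nat.even_add] at *; simp only [Nat.even_add_one]; tauto)]
      exact hYz s) hE0 hE
  have hb : altProd (σ (m + 1)) (σ (m + 1 + 1)) (m + 1) = altProd (σ m) (σ (m + 1)) (m + 1) := by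
    rw [hσ2 m, hσe, hσe]
    by_cases h : Even m
    · have h' : ¬ Even (m + 1) := by simp [Nat.even_add_one, h]
      simp only [altS, if_pos h, if_neg h']
      exact H.braid.symm
    · have h' : Even (m + 1) := by simp [Nat.even_add_one, h]
      simp only [altS, if_neg h, if_pos h']
      exact H.braid
  have hσ0 : σ 0 * E 0 = E 0 := by
    rw [hE0]
    simp only [hσd]
    rw [sub_mul, mul_assoc, hYz 0]; simp
  have hEE : E (m + 1) = E m := by
    rw [← altProd_sigma_E σ E hσ2 hE (m + 1), hb, altProd_sigma_E' σ E hσ2 hσ0 hE]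
  rw [hx (m + 1) (m + 2) (by omega), hx m (m + 1) (by omega), Finset.sum_range_succ,
    Finset.sum_congr rfl (fun s hs => by rw [H.c_eq s (Finset.mem_range.1 hs)])] at hEE
  have hz : φ (cCo (altS s0 s1) (GamS p q η) (m + 1) (m + 1)) * Y (m + 1) = 0 := by simpa using hEE
  rw [cCo_top _ _ H.S_Gam] at hz
  obtain ⟨c, hc, hc'⟩ := prod_GamS p q η (m + 1) H.m0 h0 H.prim (m + 1)
  rw [hc', smul_smul] at hz
  have hne : eSg (m + 1) * c ≠ 0 := mul_ne_zero (eSg_ne _) hc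
  have : p ^ (m + 1) - q ^ (m + 1) = algebraMap ℂ A (eSg (m + 1) * c)⁻¹ *
      ((eSg (m + 1) * c) • (p ^ (m + 1) - q ^ (m + 1))) := by
    rw [← Algebra.smul_def, smul_smul, inv_mul_cancel₀ hne, one_smul]
  rw [this, map_mul, mul_assoc]
  show _ * (_ * Y (m + 1)) = 0
  rw [hz, mul_zero]

end PQchain

section PQideal

variable {A R : Type*} [CommRing A] [IsDomain A] [Algebra ℂ A] [Ring R]

def kI (φ : A →+* R) (g0 g1 : R) (m : ℕ) (f : A) : Prop :=
  ∀ n, φ f * altProd g0 g1 (m + 1 + n) = 0 ∧ φ f * altProd g1 g0 (m + 1 + n) = 0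

theorem kI.swap {φ : A →+* R} {g0 g1 : R} {m : ℕ} {f : A} (h : kI φ g0 g1 m f) : kI φ g1 g0 m f :=
  fun n => ⟨(h n).2, (h n).1⟩

theorem kI.mul {φ : A →+* R} {g0 g1 : R} {m : ℕ} {f : A} (h : kI φ g0 g1 m f) (a : A) :
    kI φ g0 g1 m (a * f) :=
  fun n => ⟨by rw [map_mul, mul_assoc, (h n).1, mul_zero], by rw [map_mul, mul_assoc, (h n).2, mul_zero]⟩

theorem kI.smul {φ : A →+* R} {g0 g1 : R} {m : ℕ} {f : A} (h : kI φ g0 g1 m f) (c : ℂ) :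
    kI φ g0 g1 m (c • f) := by
  rw [Algebra.smul_def]; exact h.mul _

theorem kI.of_smul {φ : A →+* R} {g0 g1 : R} {m : ℕ} {f : A} {c : ℂ} (h : kI φ g0 g1 m (c • f))
    (hc : c ≠ 0) : kI φ g0 g1 m f := by
  have := h.smul c⁻¹
  rwa [smul_smul, inv_mul_cancel₀ hc, one_smul] at this

theorem kI.sub {φ : A →+* R} {g0 g1 : R} {m : ℕ} {f g : A} (h : kI φ g0 g1 m f)
    (h' : kI φ g0 g1 m g) : kI φ g0 g1 m (f - g) :=
  fun n => ⟨by rw [map_sub, sub_mul, (h n).1, (h' n).1, sub_zero],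
    by rw [map_sub, sub_mul, (h n).2, (h' n).2, sub_zero]⟩

theorem kI.sum {φ : A →+* R} {g0 g1 : R} {m : ℕ} {f : ℕ → A} (h : ∀ j, kI φ g0 g1 m (f j)) (N : ℕ) :
    kI φ g0 g1 m (∑ j ∈ Finset.range N, f j) :=
  fun n => ⟨by rw [map_sum, Finset.sum_mul]; exact Finset.sum_eq_zero fun j _ => (h j n).1,
    by rw [map_sum, Finset.sum_mul]; exact Finset.sum_eq_zero fun j _ => (h j n).2⟩

theorem PQ.kd0 {φ : A →+* R} {s0 s1 : A →ₐ[ℂ] A} {g0 g1 : R} {p q : A} {η : ℂ} {m : ℕ}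
    (H : PQ φ s0 s1 g0 g1 p q η m) {f f' : A} (h : kI φ g0 g1 m f)
    (hf : (p - q) * f' = f - s0 f) : kI φ g0 g1 m f' := by
  have hz : ∀ n, g0 * altProd g0 g1 (m + 1 + n) = 0 := by
    intro n
    rw [show m + 1 + n = (m + n) + 1 by omega, altProd, ← mul_assoc, H.sq0, zero_mul]
  have h1 : ∀ n, φ f' * altProd g0 g1 (m + 1 + n) = 0 := by
    intro n
    have := congrArg (g0 * ·) (h n).1
    simp only [mul_zero] at this
    rw [← mul_assoc, H.L0 f f' hf, add_mul, mul_assoc (φ (s0 f)), hz, mul_zero, add_zero] at this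
    exact this
  have hs : s0 f = f - (p - q) * f' := by rw [hf]; ring
  intro n
  refine ⟨h1 n, ?_⟩
  have := congrArg (g0 * ·) (h n).2
  simp only [mul_zero] at this
  have e : g0 * altProd g1 g0 (m + 1 + n) = altProd g0 g1 (m + 1 + (n + 1)) := rfl
  rw [← mul_assoc, H.L0 f f' hf, add_mul, mul_assoc (φ (s0 f)), e, hs, map_sub, sub_mul, (h _).1,
    map_mul, mul_assoc (φ (p - q)), h1, mul_zero, sub_zero, add_zero] at this
  exact this

theorem PQ.ks0 {φ : A →+* R} {s0 s1 : A →ₐ[ℂ] A} {g0 g1 : R} {p q : A} {η : ℂ} {m : ℕ}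
    (H : PQ φ s0 s1 g0 g1 p q η m) {f : A} (h : kI φ g0 g1 m f) : kI φ g0 g1 m (s0 f) := by
  obtain ⟨f', hf⟩ := H.ex0 f
  have hs : s0 f = f - (p - q) * f' := by rw [hf]; ring
  rw [hs]
  exact h.sub ((H.kd0 h hf).mul _)

theorem PQ.kd1 {φ : A →+* R} {s0 s1 : A →ₐ[ℂ] A} {g0 g1 : R} {p q : A} {η : ℂ} {m : ℕ}
    (H : PQ φ s0 s1 g0 g1 p q η m) {f f' : A} (h : kI φ g0 g1 m f)
    (hf : (η⁻¹ • p - η • q) * f' = f - s1 f) : kI φ g0 g1 m f' := by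
  refine (H.swap.kd0 h.swap (f' := f') ?_).swap
  rw [← hf]; ring

theorem PQ.ks1 {φ : A →+* R} {s0 s1 : A →ₐ[ℂ] A} {g0 g1 : R} {p q : A} {η : ℂ} {m : ℕ}
    (H : PQ φ s0 s1 g0 g1 p q η m) {f : A} (h : kI φ g0 g1 m f) : kI φ g0 g1 m (s1 f) :=
  (H.swap.ks0 h.swap).swap

theorem PQ.kD {φ : A →+* R} {s0 s1 : A →ₐ[ℂ] A} {g0 g1 : R} {p q : A} {η : ℂ} {m : ℕ}
    (H : PQ φ s0 s1 g0 g1 p q η m) : kI φ g0 g1 m (p ^ m - q ^ m) := by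
  have hem : algebraMap ℂ A η ^ m = -1 := by rw [← map_pow, H.em]; simp
  have hem' : algebraMap ℂ A η⁻¹ ^ m = -1 := by rw [← map_pow, inv_pow, H.em]; simp
  have e : (-(η • q)) ^ m - (-(η⁻¹ • p)) ^ m = (-1 : A) ^ m * (p ^ m - q ^ m) := by
    rw [neg_pow, neg_pow (η⁻¹ • p), Algebra.smul_def, Algebra.smul_def, mul_pow, mul_pow, hem, hem']
    ring
  have k1 := H.kill
  have k2 : ∀ n, φ (p ^ m - q ^ m) * altProd (altS g1 g0 m) (altS g1 g0 (m + 1)) (n + 1 + m) = 0 := by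
    intro n
    have := H.swap.kill n
    rw [e] at this
    have h2 := congrArg (φ ((-1) ^ m) * ·) this
    simp only [mul_zero] at h2
    rw [← mul_assoc, ← map_mul, ← mul_assoc, ← mul_pow] at h2
    simpa using h2
  intro n
  have a1 := k1 n
  have a2 := k2 n
  rw [show n + 1 + m = m + 1 + n by omega] at a1 a2
  by_cases h : Even m
  · have h' : ¬ Even (m + 1) := by simp [Nat.even_add_one, h]
    simp only [altS, if_pos h, if_neg h'] at a1 a2
    exact ⟨a1, a2⟩
  · have h' : Even (m + 1) := by simp [Nat.even_add_one, h]
    simp only [altS, if_neg h, if_pos h'] at a1 a2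
    exact ⟨a2, a1⟩

def hSum (p q : A) (z : A) (e j : ℕ) : A := ∑ i ∈ Finset.range e, (z ^ j * q) ^ i * p ^ (e - 1 - i)

theorem hSum_mul (p q z : A) (e j : ℕ) :
    (p - z ^ j * q) * hSum p q z e j = p ^ e - (z ^ j * q) ^ e := by
  have := (Commute.all (z ^ j * q) p).geom_sum₂_mul e
  rw [hSum]
  linear_combination (-1 : A) * this

theorem PQ.h01 {φ : A →+* R} {s0 s1 : A →ₐ[ℂ] A} {g0 g1 : R} {p q : A} {η : ℂ} {m : ℕ}
    (H : PQ φ s0 s1 g0 g1 p q η m) (e : ℕ) (he : e = m ∨ kI φ g0 g1 m (p ^ e)) :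
    kI φ g0 g1 m (hSum p q (algebraMap ℂ A (η ^ 2)) e 0) ∧
    kI φ g0 g1 m (hSum p q (algebraMap ℂ A (η ^ 2)) e 1) := by
  have h0 := H.eta_ne
  set z := algebraMap ℂ A (η ^ 2) with hz
  have e0 := hSum_mul p q z e 0
  have e1 := hSum_mul p q z e 1
  have hη : algebraMap ℂ A η⁻¹ * algebraMap ℂ A η = 1 := by
    rw [← map_mul, inv_mul_cancel₀ h0, map_one]
  have hzz : z = algebraMap ℂ A η * algebraMap ℂ A η := by rw [hz, ← map_mul, pow_two]
  have hs1p : s1 p = z * q := by rw [H.s1p, Algebra.smul_def]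
  have key : ∀ x : A, (η⁻¹ • p - η • q) * (η • x) = (p - z ^ 1 * q) * x := by
    intro x
    simp only [Algebra.smul_def, hzz]
    linear_combination (p * x) * hη
  have hzm : z ^ m = 1 := by rw [hz, ← map_pow, H.prim.pow_eq_one, map_one]
  rcases he with rfl | he
  · have hD := H.kD
    have hs1q : s1 q ^ e = p ^ e := by
      rw [H.s1q, Algebra.smul_def, mul_pow, ← map_pow, inv_pow, H.prim.pow_eq_one]; simp
    have a0 := H.kd0 hD (f' := (2 : ℂ) • hSum p q z e 0) (by
      rw [map_sub, map_pow, map_pow, H.s0p, H.s0q, Algebra.smul_def, map_ofNat]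
      linear_combination 2 * e0)
    have a1 := H.kd1 hD (f' := η • (2 : ℂ) • hSum p q z e 1) (by
      rw [map_sub, map_pow, map_pow, hs1q, hs1p, key, Algebra.smul_def, map_ofNat]
      rw [pow_one, mul_pow, hzm] at e1
      rw [pow_one, mul_pow, hzm]
      linear_combination 2 * e1)
    exact ⟨a0.of_smul two_ne_zero, (a1.of_smul h0).of_smul two_ne_zero⟩
  · have a0 := H.kd0 he (f' := hSum p q z e 0) (by
      rw [map_pow, H.s0p]
      linear_combination e0)
    have a1 := H.kd1 he (f' := η • hSum p q z e 1) (by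
      rw [map_pow, hs1p, key]
      linear_combination e1)
    exact ⟨a0, a1.of_smul h0⟩

theorem PQ.hrho {φ : A →+* R} {s0 s1 : A →ₐ[ℂ] A} {g0 g1 : R} {p q : A} {η : ℂ} {m : ℕ}
    (H : PQ φ s0 s1 g0 g1 p q η m) (e j : ℕ)
    (h : kI φ g0 g1 m (hSum p q (algebraMap ℂ A (η ^ 2)) e j)) :
    kI φ g0 g1 m (hSum p q (algebraMap ℂ A (η ^ 2)) e (j + 2)) := by
  have h0 : η ^ 2 ≠ 0 := pow_ne_zero _ H.eta_ne
  have t1 := H.s1p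
  have t2 := H.s1q
  generalize η ^ 2 = ζ at h h0 t1 t2 ⊢
  have hu := (H.ks1 (H.ks0 h)).mul (algebraMap ℂ A ζ ^ (e - 1))
  convert hu using 1
  simp only [hSum, map_sum, map_mul, map_pow, H.s0p, H.s0q, t1, t2, AlgHom.commutes, Finset.mul_sum]
  refine Finset.sum_congr rfl fun i hi => ?_
  rw [Finset.mem_range] at hi
  obtain ⟨r, hr⟩ : ∃ r, e - 1 = i + r := ⟨e - 1 - i, by omega⟩
  rw [hr, show i + r - i = r by omega]
  have hη : algebraMap ℂ A ζ * algebraMap ℂ A ζ⁻¹ = 1 := by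
    rw [← map_mul, mul_inv_cancel₀ h0, map_one]
  simp only [Algebra.smul_def]
  generalize algebraMap ℂ A ζ⁻¹ = w at *
  generalize algebraMap ℂ A ζ = z at *
  have : z ^ r * w ^ r = 1 := by rw [← mul_pow, hη, one_pow]
  simp only [mul_pow, pow_add]
  linear_combination (-((z ^ j) ^ i * (z ^ 2) ^ i * q ^ i * p ^ r)) * this

theorem PQ.hall {φ : A →+* R} {s0 s1 : A →ₐ[ℂ] A} {g0 g1 : R} {p q : A} {η : ℂ} {m : ℕ}
    (H : PQ φ s0 s1 g0 g1 p q η m) (e : ℕ) (he : e = m ∨ kI φ g0 g1 m (p ^ e)) (j : ℕ) :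
    kI φ g0 g1 m (hSum p q (algebraMap ℂ A (η ^ 2)) e j) ∧
    kI φ g0 g1 m (hSum p q (algebraMap ℂ A (η ^ 2)) e (j + 1)) := by
  induction j with
  | zero => exact H.h01 e he
  | succ j ih => exact ⟨ih.2, H.hrho e j ih.1⟩

theorem PQ.step {φ : A →+* R} {s0 s1 : A →ₐ[ℂ] A} {g0 g1 : R} {p q : A} {η : ℂ} {m : ℕ}
    (H : PQ φ s0 s1 g0 g1 p q η m) (e : ℕ) (hem : e + 1 ≤ m)
    (he : e + 1 = m ∨ kI φ g0 g1 m (p ^ (e + 1))) : kI φ g0 g1 m (p ^ e) := by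
  have hs := kI.sum (fun j => (H.hall (e + 1) he j).1) m
  have hsum : ∑ j ∈ Finset.range m, hSum p q (algebraMap ℂ A (η ^ 2)) (e + 1) j = (m : ℂ) • p ^ e := by
    simp only [hSum]
    rw [Finset.sum_comm, Finset.sum_range_succ']
    rw [Finset.sum_eq_zero, zero_add]
    · simp [Algebra.smul_def]
    · intro i hi
      rw [Finset.mem_range] at hi
      rw [← Finset.sum_mul]
      have : ∑ j ∈ Finset.range m, (algebraMap ℂ A (η ^ 2) ^ j * q) ^ (i + 1) =
          algebraMap ℂ A (∑ j ∈ Finset.range m, ((η ^ 2) ^ (i + 1)) ^ j) * q ^ (i + 1) := by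
        rw [map_sum, Finset.sum_mul]
        refine Finset.sum_congr rfl fun j _ => ?_
        generalize η ^ 2 = ζ
        simp only [map_pow]
        ring
      rw [this]
      have hg := mul_neg_geom_sum ((η ^ 2) ^ (i + 1)) m
      rw [← pow_mul (η ^ 2) (i + 1) m, mul_comm (i + 1) m, pow_mul (η ^ 2) m, H.prim.pow_eq_one, one_pow, sub_self] at hg
      have hne : 1 - (η ^ 2) ^ (i + 1) ≠ 0 := by
        rw [sub_ne_zero]
        exact (H.prim.pow_ne_one_of_pos_of_lt (by omega) (by omega)).symm
      rw [(mul_eq_zero.1 hg).resolve_left hne]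
      simp
  rw [hsum] at hs
  exact hs.of_smul (by exact_mod_cast H.m0.ne')

theorem PQ.final {φ : A →+* R} {s0 s1 : A →ₐ[ℂ] A} {g0 g1 : R} {p q : A} {η : ℂ} {m : ℕ}
    (H : PQ φ s0 s1 g0 g1 p q η m) :
    altProd g0 g1 (m + 1) = 0 ∧ altProd g1 g0 (m + 1) = 0 := by
  have : ∀ r e, e + 1 + r = m → kI φ g0 g1 m (p ^ e) := by
    intro r
    induction r with
    | zero => intro e he; exact H.step e (by omega) (Or.inl (by omega))
    | succ r ih => intro e he; exact H.step e (by omega) (Or.inr (ih (e + 1) (by omega)))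
  have h1 := this (m - 1) 0 (by have := H.m0; omega) 0
  simpa using h1

end PQideal

section DataSec

variable {V : Type*} [AddCommGroup V] [Module ℂ V]

def RData (α β : V →ₗ[ℂ] ℂ) (c e : V) (m : ℕ) : Prop :=
  ∃ (η lam : ℂ) (P Q : V →ₗ[ℂ] ℂ), lam ≠ 0 ∧ IsPrimitiveRoot (η ^ 2) m ∧ η ^ m = -1 ∧
    α = P - Q ∧ β = lam • (η⁻¹ • P - η • Q) ∧ P c = 1 ∧ Q c = -1 ∧ P e = η / lam ∧ Q e = -η⁻¹ / lam

theorem unip {g : Module.End ℂ V} {δ θ : V →ₗ[ℂ] ℂ} (h1 : ∀ v, δ (g v) = δ v + θ v)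
    (h2 : ∀ v, θ (g v) = θ v) {N : ℕ} (hN : 0 < N) (hg : g ^ N = 1) (v : V) : θ v = 0 := by
  have h3 : ∀ n, θ ((g ^ n) v) = θ v := by
    intro n
    induction n with
    | zero => simp
    | succ n ih => rw [pow_succ', Module.End.mul_apply, h2, ih]
  have h4 : ∀ n : ℕ, δ ((g ^ n) v) = δ v + n * θ v := by
    intro n
    induction n with
    | zero => simp
    | succ n ih => rw [pow_succ', Module.End.mul_apply, h1, ih, h3]; push_cast; ring
  have := h4 N
  rw [hg] at this
  have hN' : (N : ℂ) ≠ 0 := by exact_mod_cast hN.ne'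
  have h5 : (N : ℂ) * θ v = 0 := by
    simpa using this
  exact (mul_eq_zero.1 h5).resolve_left hN'

theorem data_four (α β : V →ₗ[ℂ] ℂ) (c e : V) (hc : α c = 2) (he : β e = 2) (g : Module.End ℂ V)
    (hg : ∀ v, g v = v - β v • e - (α v - β v * α e) • c) (m : ℕ) (hm : 0 < m)
    (hd : ∀ n, g ^ n = 1 ↔ m ∣ n) (h4 : β c * α e = 4) : RData α β c e m := by
  have hgm : g ^ m = 1 := (hd m).2 dvd_rfl
  have ha : β c ≠ 0 := by rintro h; rw [h] at h4; norm_num at h4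
  have hb : α e ≠ 0 := by rintro h; rw [h] at h4; norm_num at h4
  have hαg : ∀ v, α (g v) = - α v + α e * β v := by
    intro v; rw [hg]; simp [hc]; ring
  have hβg : ∀ v, β (g v) = - β v - β c * α v + β c * α e * β v := by
    intro v; rw [hg]; simp [he]; ring
  have hβ : ∀ v, β v = (β c / 2) * α v := by
    intro v
    have := unip (g := g) (δ := α) (θ := (α e / 2) • ((2 : ℂ) • β - β c • α))
      (by intro v; rw [hαg]; simp; linear_combination (α v / 2) * h4)
      (by intro v; simp [hαg, hβg]; left; linear_combination (β v) * h4) hm hgm v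
    simp [hb] at this
    linear_combination this / 2
  have hgv : ∀ v, g v = v + α v • (c - (β c / 2) • e) := by
    intro v
    rw [hg, hβ v, show α v - β c / 2 * α v * α e = - α v by linear_combination (- α v / 2) * h4]
    rw [smul_sub, smul_smul, neg_smul, mul_comm (α v)]
    abel
  have hw : α (c - (β c / 2) • e) = 0 := by
    simp [hc]; linear_combination (-1 / 2) * h4
  have hpow : ∀ n : ℕ, (g ^ n) c = c + (n * 2 : ℂ) • (c - (β c / 2) • e) := by
    intro n
    induction n with
    | zero => simp
    | succ n ih =>
      rw [pow_succ', Module.End.mul_apply, ih, hgv, map_add, map_smul, hw, hc, add_assoc, ← add_smul]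
      simp; ring_nf
  have hw0 : c - (β c / 2) • e = 0 := by
    have := hpow m
    rw [hgm] at this
    have hN' : (m : ℂ) * 2 ≠ 0 := mul_ne_zero (by exact_mod_cast hm.ne') two_ne_zero
    have h5 : (m * 2 : ℂ) • (c - (β c / 2) • e) = 0 := by
      rw [Module.End.one_apply] at this
      exact (left_eq_add.1 this)
    exact (smul_eq_zero.1 h5).resolve_left hN'
  have hm1 : m = 1 := by
    have : g ^ 1 = 1 := by
      ext v; rw [pow_one, hgv, hw0]; simp
    exact Nat.dvd_one.1 ((hd 1).1 this)
  subst hm1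
  refine ⟨-1, - β c / 2, (1 / 2 : ℂ) • α, (- 1 / 2 : ℂ) • α, ?_, ?_, ?_, ?_, ?_, ?_, ?_, ?_, ?_⟩
  · simpa using ha
  · simp
  · simp
  · ext v; simp; ring
  · ext v; rw [hβ]; simp; ring
  · simp [hc]
  · simp [hc]
  · simp; field_simp; linear_combination h4
  · simp; field_simp; linear_combination (-1 : ℂ) * h4

theorem data_zero (α β : V →ₗ[ℂ] ℂ) (c e : V) (hc : α c = 2) (he : β e = 2) (g : Module.End ℂ V)
    (hg : ∀ v, g v = v - β v • e - (α v - β v * α e) • c) (m : ℕ) (hm : 0 < m)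
    (hd : ∀ n, g ^ n = 1 ↔ m ∣ n) : β c = 0 ↔ α e = 0 := by
  have hgm : g ^ m = 1 := (hd m).2 dvd_rfl
  have hgm2 : (g * g) ^ m = 1 := by rw [← pow_two, ← pow_mul, mul_comm, pow_mul, hgm, one_pow]
  have hαg : ∀ v, α (g v) = - α v + α e * β v := by
    intro v; rw [hg]; simp [hc]; ring
  have hβg : ∀ v, β (g v) = - β v - β c * α v + β c * α e * β v := by
    intro v; rw [hg]; simp [he]; ring
  constructor
  · intro h
    have := unip (g := g * g) (δ := α) (θ := (-2 * α e) • β)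
      (by intro v; simp [hαg, hβg, h]; ring) (by intro v; simp [hβg, h]) hm hgm2 e
    simpa [he] using this
  · intro h
    have := unip (g := g * g) (δ := β) (θ := (2 * β c) • α)
      (by intro v; simp [hαg, hβg, h]; ring) (by intro v; simp [hαg, h]) hm hgm2 c
    simpa [hc] using this

theorem data_exists (α β : V →ₗ[ℂ] ℂ) (c e : V) (hc : α c = 2) (he : β e = 2) (g : Module.End ℂ V)
    (hg : ∀ v, g v = v - β v • e - (α v - β v * α e) • c) (m : ℕ) (hm : 0 < m)
    (hd : ∀ n, g ^ n = 1 ↔ m ∣ n) : RData α β c e m := by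
  by_cases h4 : β c * α e = 4
  · exact data_four α β c e hc he g hg m hm hd h4
  have hz := data_zero α β c e hc he g hg m hm hd
  obtain ⟨κ, lam, hl, h1, h2⟩ : ∃ κ lam : ℂ, lam ≠ 0 ∧ β c = lam * κ ∧ α e = κ / lam := by
    by_cases h0 : β c = 0
    · exact ⟨0, 1, one_ne_zero, by simp [h0], by simp [hz.1 h0]⟩
    · obtain ⟨κ, hκ⟩ := IsAlgClosed.exists_pow_nat_eq (β c * α e) (n := 2) (by norm_num)
      have hb : α e ≠ 0 := fun h => h0 (hz.2 h)
      have hκ0 : κ ≠ 0 := by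
        rintro rfl
        have : β c * α e ≠ 0 := mul_ne_zero h0 hb
        apply this; rw [← hκ]; norm_num
      refine ⟨κ, β c / κ, div_ne_zero h0 hκ0, by field_simp, ?_⟩
      field_simp
      linear_combination (-1 : ℂ) * hκ
  have hκ4 : κ ^ 2 ≠ 4 := by
    intro h; apply h4; rw [h1, h2, ← h]; field_simp
  obtain ⟨δ, hδ⟩ := IsAlgClosed.exists_pow_nat_eq (κ ^ 2 - 4) (n := 2) (by norm_num)
  obtain ⟨η, hη⟩ : ∃ η : ℂ, η ^ 2 - κ * η + 1 = 0 :=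
    ⟨(κ + δ) / 2, by linear_combination (1 / 4) * hδ⟩
  have h0 : η ≠ 0 := by rintro rfl; norm_num at hη
  have hκη : κ = η + η⁻¹ := by field_simp; linear_combination (-1 : ℂ) * hη
  have hη1 : η ^ 2 ≠ 1 := by
    intro h
    apply hκ4
    have : κ * η = 2 := by linear_combination h - hη
    calc κ ^ 2 = (κ * η) ^ 2 := by rw [mul_pow, h, mul_one]
      _ = 4 := by rw [this]; norm_num
  have hD : 1 - η ^ 2 ≠ 0 := sub_ne_zero.2 hη1.symm
  have hD' : η⁻¹ - η ≠ 0 := by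
    have : η⁻¹ - η = (1 - η ^ 2) / η := by field_simp
    rw [this]; exact div_ne_zero hD h0
  obtain ⟨Q, hQ⟩ : ∃ Q : V →ₗ[ℂ] ℂ, Q = (η⁻¹ - η)⁻¹ • (lam⁻¹ • β - η⁻¹ • α) := ⟨_, rfl⟩
  obtain ⟨P, hP⟩ : ∃ P : V →ₗ[ℂ] ℂ, P = Q + α := ⟨_, rfl⟩
  have eα : α = P - Q := by rw [hP]; abel
  have eβ : β = lam • (η⁻¹ • P - η • Q) := by
    have : (η⁻¹ - η) • Q = lam⁻¹ • β - η⁻¹ • α := by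
      rw [hQ, smul_smul, mul_inv_cancel₀ hD', one_smul]
    have h3 : η⁻¹ • P - η • Q = lam⁻¹ • β := by
      rw [hP, smul_add]
      rw [sub_smul] at this
      rw [eq_sub_iff_add_eq] at this
      rw [← this]; abel
    rw [h3, smul_smul, mul_inv_cancel₀ hl, one_smul]
  have hQc : Q c = -1 := by
    rw [hQ]; simp [h1, hc, hκη]
    rw [inv_mul_eq_iff_eq_mul₀ hD']
    field_simp; ring
  have hPc : P c = 1 := by rw [hP]; simp [hQc, hc]; norm_num
  have hQe : Q e = -η⁻¹ / lam := by
    rw [hQ]; simp [h2, he, hκη]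
    rw [inv_mul_eq_iff_eq_mul₀ hD']
    field_simp; ring
  have hPe : P e = η / lam := by
    rw [hP]; simp [hQe, h2, hκη]; field_simp; ring
  have gP : ∀ v, P (g v) = (η ^ 2)⁻¹ * P v := by
    intro v
    rw [hg]
    simp only [map_sub, map_smul, hPc, hPe, h2, smul_eq_mul, hκη]
    simp only [eα, eβ, LinearMap.sub_apply, LinearMap.smul_apply, smul_eq_mul]
    field_simp
    ring
  have gQ : ∀ v, Q (g v) = (η ^ 2) * Q v := by
    intro v
    rw [hg]
    simp only [map_sub, map_smul, hQc, hQe, h2, smul_eq_mul, hκη]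
    simp only [eα, eβ, LinearMap.sub_apply, LinearMap.smul_apply, smul_eq_mul]
    field_simp
    ring
  have gPn : ∀ (n : ℕ) v, P ((g ^ n) v) = ((η ^ 2) ^ n)⁻¹ * P v := by
    intro n v
    induction n with
    | zero => simp
    | succ n ih => rw [pow_succ', Module.End.mul_apply, gP, ih, pow_succ]; rw [mul_inv]; ring
  have gQn : ∀ (n : ℕ) v, Q ((g ^ n) v) = ((η ^ 2) ^ n) * Q v := by
    intro n v
    induction n with
    | zero => simp
    | succ n ih => rw [pow_succ', Module.End.mul_apply, gQ, ih, pow_succ]; ring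
  have gsp : ∀ (n : ℕ) v, ∃ x y : ℂ, (g ^ n) v = v + x • c + y • e := by
    intro n v
    induction n with
    | zero => exact ⟨0, 0, by simp⟩
    | succ n ih =>
      obtain ⟨x, y, h⟩ := ih
      rw [pow_succ', Module.End.mul_apply, hg]
      generalize β ((g ^ n) v) = t
      generalize α ((g ^ n) v) - t * α e = u
      refine ⟨x - u, y - t, ?_⟩
      rw [h]; module
  have hiff : ∀ n, (η ^ 2) ^ n = 1 ↔ m ∣ n := by
    intro n
    rw [← hd]
    constructor
    · intro h
      ext v
      obtain ⟨x, y, hxy⟩ := gsp n v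
      have e1 := gPn n v
      have e2 := gQn n v
      rw [h] at e1 e2
      rw [hxy] at e1 e2
      simp only [map_add, map_smul, hPc, hPe, hQc, hQe, smul_eq_mul, inv_one, one_mul] at e1 e2
      have e3 : y * (1 - η ^ 2) = 0 := by
        field_simp at e1 e2
        linear_combination (-1 : ℂ) * e2 - η * e1
      have hy : y = 0 := (mul_eq_zero.1 e3).resolve_right hD
      have hx : x = 0 := by
        rw [hy] at e1
        linear_combination e1
      rw [hxy, hx, hy]; simp
    · intro h
      have := gQn n c
      rw [h, Module.End.one_apply, hQc] at this
      linear_combination this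
  have hprim : IsPrimitiveRoot (η ^ 2) m := ⟨(hiff m).2 dvd_rfl, fun l h => (hiff l).1 h⟩
  have hsq : η ^ m = 1 ∨ η ^ m = -1 := by
    apply eq_or_eq_neg_of_sq_eq_sq; rw [one_pow]; rw [← pow_mul, mul_comm, pow_mul]; exact hprim.pow_eq_one
  rcases hsq with h | h
  · have hodd : Odd m := by
      rw [← Nat.not_even_iff_odd]
      rintro ⟨r, rfl⟩
      rw [← two_mul, pow_mul] at h
      exact hprim.pow_ne_one_of_pos_of_lt (by omega) (by omega) h
    refine ⟨-η, -lam, P, Q, neg_ne_zero.2 hl, by simpa using hprim, by rw [hodd.neg_pow, h], eα, ?_,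
      hPc, hQc, by rw [hPe]; field_simp, by rw [hQe]; field_simp⟩
    rw [eβ]
    ext v
    simp
    ring
  · exact ⟨η, lam, P, Q, hl, hprim, h, eα, eβ, hPc, hQc, hPe, hQe⟩

end DataSec

section Concrete

open MvPolynomial

theorem eval_lin {d : ℕ} (θ : Vd d →ₗ[ℂ] ℂ) (v : Vd d) : eval v (lin θ) = θ v := by
  rw [lin, map_sum]
  conv_rhs => rw [pi_eq_sum_univ' v, map_sum]
  refine Finset.sum_congr rfl fun j _ => ?_
  rw [smul_eval, eval_X, map_smul, smul_eq_mul, mul_comm]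

theorem lin_add' {d : ℕ} (θ θ' : Vd d →ₗ[ℂ] ℂ) : lin (θ + θ') = lin θ + lin θ' := by
  simp [lin, add_smul, Finset.sum_add_distrib]

theorem lin_sub' {d : ℕ} (θ θ' : Vd d →ₗ[ℂ] ℂ) : lin (θ - θ') = lin θ - lin θ' := by
  simp [lin, sub_smul, Finset.sum_sub_distrib]

theorem lin_smul' {d : ℕ} (c : ℂ) (θ : Vd d →ₗ[ℂ] ℂ) : lin (c • θ) = c • lin θ := by
  simp [lin, Finset.smul_sum, smul_smul]

theorem eval_glAct {d : ℕ} (g : GL (Fin d) ℂ) (f : Ad d) (v : Vd d) :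
    eval v (glAct g f) = eval (((g⁻¹ : GL (Fin d) ℂ) : Matrix (Fin d) (Fin d) ℂ).mulVec v) f := by
  induction f using MvPolynomial.induction_on with
  | C a => simp [glAct]
  | add p q hp hq => simp [hp, hq]
  | mul_X p i hp =>
    rw [map_mul, map_mul, hp, map_mul]
    congr 1
    simp [glAct, smul_eval, Matrix.mulVec, dotProduct]

variable {d n : ℕ} (S : CoxeterSetup d n)

theorem s_sq (i : Fin n) : S.s i * S.s i = 1 := by
  apply Subtype.ext
  apply Units.ext
  apply Matrix.toLin'.injective
  ext1 j
  ext1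
  simp only [LinearMap.comp_apply, Matrix.toLin'_apply]
  generalize LinearMap.single ℂ (fun _ => ℂ) j 1 = v
  push_cast
  rw [← Matrix.mulVec_mulVec, S.refl, S.refl]
  simp [S.pairing]
  module

theorem s_inv (i : Fin n) : ((S.s i : GL (Fin d) ℂ))⁻¹ = S.s i := by
  rw [inv_eq_iff_mul_eq_one]
  exact_mod_cast congrArg (Subtype.val) (s_sq S i)

theorem s_lin (i : Fin n) (θ : Vd d →ₗ[ℂ] ℂ) :
    glAct (S.s i : GL (Fin d) ℂ) (lin θ) = lin θ - θ (S.coroot i) • lin (S.α i) := by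
  apply MvPolynomial.funext
  intro v
  rw [eval_glAct, s_inv, S.refl, eval_lin, map_sub, map_sub, smul_eval, eval_lin, eval_lin, map_smul,
    smul_eq_mul, mul_comm]

theorem lin_ne (i : Fin n) : lin (S.α i) ≠ 0 := by
  intro h
  have := eval_lin (S.α i) (S.coroot i)
  rw [h, S.pairing] at this
  simp at this

theorem GG_sq (i : Fin n) : GG S i * GG S i = 0 := by
  have := RingQuot.mkRingHom_rel (DRel.sq (S := S) i)
  simpa [GG] using this

theorem ofA_C (c : ℂ) : ofA S (C c) = RingQuot.mkRingHom (DRel S) (algebraMap ℂ _ c) :=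
  (RingQuot.mkRingHom_rel (DRel.scalar (S := S) c)).symm

theorem ofA_C_comm (c : ℂ) (i : Fin n) : GG S i * ofA S (C c) = ofA S (C c) * GG S i := by
  rw [ofA_C, GG, ← map_mul, ← map_mul, Algebra.commutes]

theorem GG_lin (i : Fin n) (θ : Vd d →ₗ[ℂ] ℂ) :
    GG S i * ofA S (lin θ) = ofA S (C (θ (S.coroot i))) +
      ofA S (glAct (S.s i : GL (Fin d) ℂ) (lin θ)) * GG S i := by
  have := RingQuot.mkRingHom_rel (DRel.straighten (S := S) i θ)
  rw [map_mul, map_add, map_mul, ← ofA_C] at this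
  exact this

theorem GG_ex (i : Fin n) (f : Ad d) : ∃ f', lin (S.α i) * f' = f - glAct (S.s i : GL (Fin d) ℂ) f ∧
    GG S i * ofA S f = ofA S f' + ofA S (glAct (S.s i : GL (Fin d) ℂ) f) * GG S i := by
  induction f using MvPolynomial.induction_on with
  | C a =>
    have : glAct (S.s i : GL (Fin d) ℂ) (C a) = C a := by simp [glAct]
    exact ⟨0, by rw [this]; simp, by rw [this, ofA_C_comm]; simp⟩
  | add p q hp hq =>
    obtain ⟨p', h1, h2⟩ := hp
    obtain ⟨q', h3, h4⟩ := hq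
    refine ⟨p' + q', by rw [mul_add, h1, h3, map_add]; ring, ?_⟩
    rw [map_add, mul_add, h2, h4, map_add, map_add, map_add, add_mul]; abel
  | mul_X p j hp =>
    obtain ⟨p', h1, h2⟩ := hp
    have hX : (X j : Ad d) = lin (LinearMap.proj j) := by
      apply MvPolynomial.funext
      intro v; rw [eval_lin]; simp
    have h3 : lin (S.α i) * C ((LinearMap.proj j : Vd d →ₗ[ℂ] ℂ) (S.coroot i)) =
        X j - glAct (S.s i : GL (Fin d) ℂ) (X j) := by
      rw [hX, s_lin, smul_eq_C_mul]; ring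
    have h4 := GG_lin S i (LinearMap.proj j)
    rw [← hX] at h4
    refine ⟨p' * X j + glAct (S.s i : GL (Fin d) ℂ) p *
      C ((LinearMap.proj j : Vd d →ₗ[ℂ] ℂ) (S.coroot i)), ?_, ?_⟩
    · rw [map_mul]
      linear_combination X j * h1 + (glAct (S.s i : GL (Fin d) ℂ) p) * h3
    · rw [map_mul, ← mul_assoc, h2, add_mul, mul_assoc _ (GG S i), h4, mul_add, map_mul, map_add,
        map_mul, map_mul, map_mul, mul_assoc]
      abel

theorem GG_L (i : Fin n) (f f' : Ad d) (h : lin (S.α i) * f' = f - glAct (S.s i : GL (Fin d) ℂ) f) :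
    GG S i * ofA S f = ofA S f' + ofA S (glAct (S.s i : GL (Fin d) ℂ) f) * GG S i := by
  obtain ⟨f'', h1, h2⟩ := GG_ex S i f
  rw [← h1] at h
  rw [mul_left_cancel₀ (lin_ne S i) h, h2]

theorem S_data (k l : Fin n) :
    0 < mOrd S k l ∧ RData (S.α k) (S.α l) (S.coroot k) (S.coroot l) (mOrd S k l) := by
  have := S.finite
  have hm : 0 < mOrd S k l := orderOf_pos _
  refine ⟨hm, ?_⟩
  let M : Matrix (Fin d) (Fin d) ℂ := ((S.s k * S.s l : S.Γ) : GL (Fin d) ℂ)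
  refine data_exists _ _ _ _ (S.pairing k) (S.pairing l) (Matrix.toLin' M) ?_ _ hm ?_
  · intro v
    rw [Matrix.toLin'_apply]
    show (((S.s k * S.s l : S.Γ) : GL (Fin d) ℂ) : Matrix (Fin d) (Fin d) ℂ).mulVec v = _
    push_cast
    rw [← Matrix.mulVec_mulVec, S.refl, S.refl]
    simp
  · intro r
    rw [mOrd, orderOf_dvd_iff_pow_eq_one, ← Matrix.toLin'_pow]
    have h1 : (1 : Module.End ℂ (Vd d)) = Matrix.toLin' (1 : Matrix (Fin d) (Fin d) ℂ) :=
      Matrix.toLin'_one.symm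
    rw [h1, Matrix.toLin'.injective.eq_iff]
    constructor
    · intro h
      apply Subtype.ext
      apply Units.ext
      push_cast
      simpa [M] using h
    · intro h
      have h2 := congrArg (fun x : S.Γ => ((x : GL (Fin d) ℂ) : Matrix (Fin d) (Fin d) ℂ)) h
      simpa [M] using h2

theorem altProd_scale {R : Type*} [Ring R] (c x y : R) (hx : x * c = c * x) (hy : y * c = c * y) (r : ℕ) :
    (∃ j, altProd x (c * y) r = c ^ j * altProd x y r) ∧
    (∃ j, altProd (c * y) x r = c ^ j * altProd y x r) := by
  have hx' : ∀ j, x * c ^ j = c ^ j * x := fun j => ((show Commute x c from hx).pow_right j)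
  have hy' : ∀ j, y * c ^ j = c ^ j * y := fun j => ((show Commute y c from hy).pow_right j)
  induction r with
  | zero => exact ⟨⟨0, by simp [altProd]⟩, ⟨0, by simp [altProd]⟩⟩
  | succ r ih =>
    obtain ⟨⟨i, hi⟩, ⟨j, hj⟩⟩ := ih
    refine ⟨⟨j, ?_⟩, ⟨i + 1, ?_⟩⟩
    · rw [altProd, hj, ← mul_assoc, hx', mul_assoc]; rfl
    · rw [altProd, hi, mul_assoc, ← mul_assoc y, hy', pow_succ', mul_assoc, mul_assoc]; rfl

theorem map_altProd' {R T : Type*} [Ring R] [Ring T] (f : R →+* T) (r : ℕ) :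
    ∀ x y, f (altProd x y r) = altProd (f x) (f y) r := by
  induction r with
  | zero => intro x y; simp [altProd]
  | succ r ih => intro x y; rw [altProd, map_mul, ih]; rfl

theorem main_quot {R : Type*} [Ring R] (π : DD S →+* R) (k l : Fin n)
    (hb : π (altProd (sigmaD S k) (sigmaD S l) (mOrd S k l)) =
      π (altProd (sigmaD S l) (sigmaD S k) (mOrd S k l))) :
    π (altProd (GG S k) (GG S l) (mOrd S k l + 1)) = 0 ∧
    π (altProd (GG S l) (GG S k) (mOrd S k l + 1)) = 0 := by
  obtain ⟨hm, η, lam, P, Q, hl, hprim, hem, eα, eβ, hPc, hQc, hPe, hQe⟩ := S_data S k l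
  have h0 : η ≠ 0 := by
    rintro rfl
    rw [zero_pow hm.ne'] at hem
    norm_num at hem
  have la : lin (S.α k) = lin P - lin Q := by
    rw [← lin_sub', ← eα]
  have lb : lin (S.α l) = C lam * (η⁻¹ • lin P - η • lin Q) := by
    rw [← smul_eq_C_mul, ← lin_smul', ← lin_smul', ← lin_sub', ← lin_smul', ← eβ]
  have hCC : (C lam : Ad d) * C lam⁻¹ = 1 := by
    rw [← C_mul, mul_inv_cancel₀ hl, C_1]
  set φ : Ad d →+* R := π.comp (ofA S) with hφ
  have hcm : ∀ i, π (GG S i) * φ (C lam) = φ (C lam) * π (GG S i) := by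
    intro i
    rw [hφ, RingHom.comp_apply, ← map_mul, ofA_C_comm, map_mul]
  have hLL : ∀ i f f', lin (S.α i) * f' = f - glAct (S.s i : GL (Fin d) ℂ) f →
      π (GG S i) * φ f = φ f' + φ (glAct (S.s i : GL (Fin d) ℂ) f) * π (GG S i) := by
    intro i f f' h
    simp only [hφ, RingHom.comp_apply]
    rw [← map_mul, GG_L S i f f' h, map_add, map_mul]
  have hbe : φ (η⁻¹ • lin P - η • lin Q) * (φ (C lam) * π (GG S l)) = φ (lin (S.α l)) * π (GG S l) := by
    rw [← mul_assoc, ← map_mul, mul_comm _ (C lam), ← lb]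
  have hsg : ∀ i, π (sigmaD S i) = 1 - φ (lin (S.α i)) * π (GG S i) := by
    intro i
    rw [sigmaD, map_sub, map_mul, map_one]; rfl
  have H : PQ φ (glAct (S.s k : GL (Fin d) ℂ)) (glAct (S.s l : GL (Fin d) ℂ)) (π (GG S k))
      (φ (C lam) * π (GG S l)) (lin P) (lin Q) η (mOrd S k l) := by
    refine ⟨hm, hprim, hem, ?_, ?_, ?_, ?_, ?_, ?_, ?_, ?_, ?_, ?_, ?_⟩
    · rw [s_lin, hPc, la, one_smul]; abel
    · rw [s_lin, hQc, la, neg_smul, one_smul]; abel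
    · rw [s_lin, hPe, ← lin_smul', ← lin_sub', ← lin_smul']
      congr 1
      rw [eβ]; ext v; simp; field_simp; ring
    · rw [s_lin, hQe, ← lin_smul', ← lin_sub', ← lin_smul']
      congr 1
      rw [eβ]; ext v; simp; field_simp; ring
    · intro f f' h
      rw [← la] at h
      exact hLL k f f' h
    · intro f f' h
      have h1 := hLL l f (C lam⁻¹ * f') (by
        rw [← h, lb]; linear_combination (η⁻¹ • lin P - η • lin Q) * f' * hCC)
      rw [mul_assoc, h1, mul_add, ← map_mul, ← mul_assoc (C lam), hCC, one_mul, ← mul_assoc, ← mul_assoc,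
        ← map_mul, ← map_mul, mul_comm (C lam)]
    · intro f
      obtain ⟨f', h, -⟩ := GG_ex S k f
      exact ⟨f', by rw [← la, h]⟩
    · intro f
      obtain ⟨f', h, -⟩ := GG_ex S l f
      exact ⟨C lam * f', by rw [← h, lb]; ring⟩
    · rw [← map_mul, GG_sq, map_zero]
    · rw [mul_assoc, ← mul_assoc (π (GG S l)), hcm, mul_assoc (φ (C lam)), ← map_mul, GG_sq]; simp
    · rw [hbe, ← la, ← hsg, ← hsg, ← map_altProd', ← map_altProd', hb]
  have hf := H.final
  have hun : ∀ j x, φ (C lam) ^ j * x = 0 → x = 0 := by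
    intro j x hx
    have h1 : φ (C lam⁻¹) ^ j * φ (C lam) ^ j = 1 := by
      rw [← map_pow φ, ← map_pow φ, ← map_mul, ← mul_pow, mul_comm, hCC, one_pow, map_one]
    rw [← one_mul x, ← h1, mul_assoc, hx, mul_zero]
  obtain ⟨⟨i, hi⟩, ⟨j, hj⟩⟩ := altProd_scale (φ (C lam)) (π (GG S k)) (π (GG S l)) (hcm k) (hcm l)
    (mOrd S k l + 1)
  rw [map_altProd', map_altProd']
  exact ⟨hun i _ (by rw [← hi, hf.1]), hun j _ (by rw [← hj, hf.2])⟩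

end Concrete

/-- For `k ≠ l` with `m = m_{kl}`, the alternating products
`G_kG_lG_k⋯` and `G_lG_kG_l⋯` with `m + 1` factors both lie in the two-sided ideal
generated by the Coxeter braid relators. -/
theorem altProd_succ_mem_braid_ideal {d n : ℕ} (S : CoxeterSetup d n) (k l : Fin n)
    (hkl : k ≠ l) :
    altProd (GG S k) (GG S l) (mOrd S k l + 1) ∈ TwoSidedIdeal.span (coxeterBraidSet S) ∧
    altProd (GG S l) (GG S k) (mOrd S k l + 1) ∈ TwoSidedIdeal.span (coxeterBraidSet S) := by
  have key : ∀ x, x ∈ TwoSidedIdeal.span (coxeterBraidSet S) ↔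
      (TwoSidedIdeal.span (coxeterBraidSet S)).ringCon.mk' x = 0 := by
    intro x
    rw [TwoSidedIdeal.mem_iff]
    exact (RingCon.eq _).symm
  rw [key, key]
  apply main_quot
  rw [← sub_eq_zero, ← map_sub, ← key]
  exact TwoSidedIdeal.subset_span ⟨k, l, hkl, rfl⟩
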